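/- If ω is a real-valued random variable with a density with respect to Lebesgue measure on (0,∞), then the random variable (ωt) mod 2π converges in distribution to the uniform distribution on [0,2π] as t → ∞; equivalently, for every bounded continuous function f on [0,2π], E[f((ωt) mod 2π)] → (1/2π)∫₀^{2π} f(s) ds. -/

import Mathlib

open MeasureTheory Filter Real Set

/-!
Let `h` be integrable and let `k` be bounded and periodic with period `P`. Translating `k` by `a`
changes `∫ h k` by at most `sup |k|` times the `L¹` distance between `h` and its translate by `a`,
while averaging `∫ h(x) k(x + a) dx` over `a ∈ [0, P]` gives exactly `(∫ h)` times the mean of `k`.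
Hence `∫ h k` differs from that product by at most `sup |k|` times the `L¹` modulus of continuity
of `h` at scale `P`. For `k(x) = g(x t)`, where `g` has period `T`, the scale `P = T / t` tends to
zero while the mean is that of `g`; taking for `h` the density of `ω` gives the limit law.
-/

open scoped Topology Interval ENNReal

section Translation

variable {X M E : Type*} [MeasurableSpace X] [NormedAddCommGroup E] {μ : Measure X}

section Continuity

variable [TopologicalSpace X] [R1Space X] [BorelSpace X] [AddMonoid M] [TopologicalSpace M]
  [MeasurableSpace M] [OpensMeasurableSpace M] [AddAction M X] [ContinuousVAdd M X]
  [IsLocallyFiniteMeasure μ] [μ.InnerRegularCompactLTTop] [VAddInvariantMeasure M X μ]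

theorem tendsto_eLpNorm_comp_vadd_sub {p : ℝ≥0∞} (hp_one : 1 ≤ p) (hp_top : p ≠ ∞) {f : X → E}
    (hf : MemLp f p μ) :
    Tendsto (fun c : M => eLpNorm (fun x => f (c +ᵥ x) - f x) p μ) (𝓝 0) (𝓝 0) := by
  have : Fact (1 ≤ p) := ⟨hp_one⟩
  have : Fact (p ≠ ∞) := ⟨hp_top⟩
  have translate_continuous : Continuous fun c : M => DomAddAct.mk c +ᵥ hf.toLp f :=
    DomAddAct.continuous_mk.vadd continuous_const
  have edist_tendsto := (translate_continuous.edist (continuous_const (y := hf.toLp f))).tendsto 0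
  simp only [DomAddAct.mk_zero, zero_vadd, edist_self] at edist_tendsto
  refine edist_tendsto.congr fun c => ?_
  rw [DomAddAct.mk_vadd_toLp, Lp.edist_toLp_toLp]
  rfl

theorem tendsto_integral_norm_comp_vadd_sub {f : X → E} (hf : Integrable f μ) :
    Tendsto (fun c : M => ∫ x, ‖f (c +ᵥ x) - f x‖ ∂μ) (𝓝 0) (𝓝 0) := by
  have eLpNorm_tendsto := tendsto_eLpNorm_comp_vadd_sub (M := M) le_rfl ENNReal.one_ne_top
    (memLp_one_iff_integrable.2 hf)
  refine ((ENNReal.tendsto_toReal ENNReal.zero_ne_top).comp eLpNorm_tendsto).congr fun c => ?_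
  have translate_integrable : Integrable (fun x => f (c +ᵥ x)) μ :=
    (measurePreserving_vadd c μ).integrable_comp_of_integrable hf
  rw [Function.comp_apply, eLpNorm_one_eq_lintegral_enorm]
  exact (integral_norm_eq_lintegral_enorm (translate_integrable.sub hf).aestronglyMeasurable).symm

end Continuity

theorem norm_integral_smul_comp_vadd_sub_le [AddGroup M] [AddAction M X] [MeasurableConstVAdd M X]
    [VAddInvariantMeasure M X μ] [NormedSpace ℝ E] {h : X → ℝ} {k : X → E} {C : ℝ}
    (hh : Integrable h μ) (hk : AEStronglyMeasurable k μ) (hC : ∀ᵐ x ∂μ, ‖k x‖ ≤ C) (c : M) :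
    ‖(∫ x, h x • k (c +ᵥ x) ∂μ) - ∫ x, h x • k x ∂μ‖ ≤ C * ∫ x, ‖h (-c +ᵥ x) - h x‖ ∂μ := by
  have translate_integrable : Integrable (fun x => h (-c +ᵥ x)) μ :=
    (measurePreserving_vadd (-c) μ).integrable_comp_of_integrable hh
  have smul_integrable {u : X → ℝ} (hu : Integrable u μ) : Integrable (fun x => u x • k x) μ :=
    hu.smul_bdd C hk hC
  have change_variable : ∫ x, h x • k (c +ᵥ x) ∂μ = ∫ x, h (-c +ᵥ x) • k x ∂μ := by
    rw [← integral_vadd_eq_self (fun x => h (-c +ᵥ x) • k x) (g := c)]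
    simp only [neg_vadd_vadd]
  rw [change_variable, ← integral_sub (smul_integrable translate_integrable) (smul_integrable hh),
    ← integral_const_mul]
  refine norm_integral_le_of_norm_le ((translate_integrable.sub hh).norm.const_mul C) ?_
  filter_upwards [hC] with x hCx
  rw [← sub_smul, norm_smul, mul_comm]
  gcongr

end Translation

section Periodic

variable {E : Type*} [NormedAddCommGroup E] [NormedSpace ℝ E]

theorem interval_average_comp_mul_right (g : ℝ → E) (T : ℝ) {t : ℝ} (ht : t ≠ 0) :
    ⨍ a in 0..T / t, g (a * t) = ⨍ a in 0..T, g a := by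
  rw [interval_average_eq, interval_average_eq, intervalIntegral.integral_comp_mul_right _ ht,
    smul_smul, zero_mul, div_mul_cancel₀ _ ht, sub_zero, sub_zero, ← mul_inv, div_mul_cancel₀ _ ht]

theorem interval_average_comp_add_right_of_periodic {k : ℝ → E} {P : ℝ}
    (hP : Function.Periodic k P) (x : ℝ) : ⨍ a in 0..P, k (a + x) = ⨍ a in 0..P, k a := by
  rw [interval_average_eq, interval_average_eq, intervalIntegral.integral_comp_add_right, zero_add,
    add_comm P, hP.intervalIntegral_add_eq x 0, zero_add]

instance isFiniteMeasure_restrict_uIoc (μ : Measure ℝ) [IsLocallyFiniteMeasure μ] (a b : ℝ) :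
    IsFiniteMeasure (μ.restrict (Ι a b)) :=
  ⟨(Measure.restrict_apply_univ _).trans_lt measure_Ioc_lt_top⟩

theorem integrable_prod_smul_comp_add {ν : Measure ℝ} [IsFiniteMeasure ν] {h : ℝ → ℝ} {k : ℝ → E}
    {C : ℝ} (hh : Integrable h) (hk : StronglyMeasurable k) (hC : ∀ x, ‖k x‖ ≤ C) :
    Integrable (fun p : ℝ × ℝ => h p.2 • k (p.1 + p.2)) (ν.prod volume) :=
  (hh.comp_snd ν).smul_bdd C (hk.comp_measurable measurable_add).aestronglyMeasurable
    (ae_of_all _ fun _ => hC _)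

variable [CompleteSpace E]

theorem interval_average_integral_smul_comp_add {h : ℝ → ℝ} {k : ℝ → E} {C P : ℝ}
    (hh : Integrable h) (hk : StronglyMeasurable k) (hC : ∀ x, ‖k x‖ ≤ C)
    (hP : Function.Periodic k P) :
    ⨍ a in 0..P, ∫ x, h x • k (a + x) = (∫ x, h x) • ⨍ a in 0..P, k a := by
  calc ⨍ a in 0..P, ∫ x, h x • k (a + x)
      = ∫ x, h x • ⨍ a in 0..P, k (a + x) := by
        simp only [interval_average_eq]
        rw [intervalIntegral_integral_swap (integrable_prod_smul_comp_add hh hk hC),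
          ← integral_smul]
        simp only [intervalIntegral.integral_smul, smul_comm (P - 0)⁻¹]
    _ = (∫ x, h x) • ⨍ a in 0..P, k a := by
        simp only [interval_average_comp_add_right_of_periodic hP, integral_smul_const]

theorem norm_integral_smul_sub_interval_average_le {h : ℝ → ℝ} {k : ℝ → E} {C P η : ℝ}
    (hh : Integrable h) (hk : StronglyMeasurable k) (hC : ∀ x, ‖k x‖ ≤ C)
    (hP : Function.Periodic k P) (hP₀ : P ≠ 0) (hη : ∀ a ∈ Ι 0 P, ∫ x, ‖h (-a + x) - h x‖ ≤ η) :
    ‖(∫ x, h x • k x) - (∫ x, h x) • ⨍ a in 0..P, k a‖ ≤ C * η := by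
  have C_nonneg : 0 ≤ C := (norm_nonneg _).trans (hC 0)
  have translate_bound : ∀ a ∈ Ι 0 P,
      ‖(∫ x, h x • k (a + x)) - ∫ x, h x • k x‖ ≤ C * η := fun a ha =>
    (norm_integral_smul_comp_vadd_sub_le hh hk.aestronglyMeasurable (ae_of_all _ hC) a).trans
      (mul_le_mul_of_nonneg_left (hη a ha) C_nonneg)
  have translate_integrable :
      IntervalIntegrable (fun a => ∫ x, h x • k (a + x)) volume 0 P :=
    intervalIntegrable_iff.2 (integrable_prod_smul_comp_add hh hk hC).integral_prod_left
  have average_sub : ⨍ a in 0..P, ((∫ x, h x • k (a + x)) - ∫ x, h x • k x) =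
      (∫ x, h x) • (⨍ a in 0..P, k a) - ∫ x, h x • k x := by
    rw [← interval_average_integral_smul_comp_add hh hk hC hP, interval_average_eq,
      interval_average_eq, intervalIntegral.integral_sub translate_integrable (by simp), smul_sub,
      intervalIntegral.integral_const, inv_smul_smul₀ (sub_ne_zero.2 hP₀)]
  rw [norm_sub_rev, ← average_sub, interval_average_eq, norm_smul, norm_inv, norm_eq_abs,
    inv_mul_le_iff₀ (abs_pos.2 (sub_ne_zero.2 hP₀)), mul_comm |P - 0|]
  exact intervalIntegral.norm_integral_le_of_norm_le_const translate_bound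

theorem tendsto_integral_smul_comp_mul_of_periodic {h : ℝ → ℝ} {g : ℝ → E} {C T : ℝ}
    (hh : Integrable h) (hg : StronglyMeasurable g) (hC : ∀ x, ‖g x‖ ≤ C)
    (hT : Function.Periodic g T) (hT₀ : T ≠ 0) :
    Tendsto (fun t : ℝ => ∫ x, h x • g (x * t)) (cocompact ℝ)
      (𝓝 ((∫ x, h x) • ⨍ a in 0..T, g a)) := by
  have C_nonneg : 0 ≤ C := (norm_nonneg _).trans (hC 0)
  rw [← Metric.cobounded_eq_cocompact, Metric.tendsto_nhds]
  intro ε hε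
  obtain ⟨δ, hδ, translate_lt⟩ := Metric.eventually_nhds_iff.1
    ((tendsto_integral_norm_comp_vadd_sub (M := ℝ) hh).eventually_lt_const
      (show 0 < ε / (C + 1) by positivity))
  have period_tendsto : Tendsto (fun t : ℝ => T / t) (Bornology.cobounded ℝ) (𝓝 0) := by
    simpa only [div_eq_mul_inv, mul_zero] using tendsto_inv₀_cobounded.const_mul T
  filter_upwards [period_tendsto.eventually (Metric.ball_mem_nhds 0 hδ),
    Bornology.eventually_ne_cobounded (0 : ℝ)] with t period_lt ht
  have dilate_periodic : Function.Periodic (fun x => g (x * t)) (T / t) := hT.mul_const t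
  have translate_le : ∀ a ∈ Ι 0 (T / t), ∫ x, ‖h (-a + x) - h x‖ ≤ ε / (C + 1) := by
    intro a ha
    refine (translate_lt ?_).le
    have abs_le_period : |a - 0| ≤ |T / t - 0| := abs_sub_left_of_mem_uIcc (uIoc_subset_uIcc ha)
    rw [dist_eq_norm, sub_zero, norm_neg, ← sub_zero a]
    exact abs_le_period.trans_lt period_lt
  have estimate := norm_integral_smul_sub_interval_average_le hh
    (hg.comp_measurable (measurable_mul_const t)) (fun x => hC (x * t)) dilate_periodic
    (div_ne_zero hT₀ ht) translate_le
  simp only [Function.comp_apply, interval_average_comp_mul_right g T ht] at estimate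
  rw [dist_eq_norm]
  refine estimate.trans_lt ?_
  rw [mul_div_left_comm]
  exact mul_lt_of_lt_one_right hε ((div_lt_one (by positivity)).2 (lt_add_one C))

theorem tendsto_integral_comp_mul_of_periodic_of_absolutelyContinuous {ν : Measure ℝ}
    [IsFiniteMeasure ν] (hν : ν ≪ volume) {g : ℝ → E} {C T : ℝ} (hg : StronglyMeasurable g)
    (hC : ∀ x, ‖g x‖ ≤ C) (hT : Function.Periodic g T) (hT₀ : T ≠ 0) :
    Tendsto (fun t : ℝ => ∫ x, g (x * t) ∂ν) (cocompact ℝ)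
      (𝓝 (ν.real univ • ⨍ a in 0..T, g a)) := by
  simpa only [integral_rnDeriv_smul hν, Measure.integral_toReal_rnDeriv hν] using
    tendsto_integral_smul_comp_mul_of_periodic
      (Measure.integrable_toReal_rnDeriv (μ := ν) (ν := volume)) hg hC hT hT₀

end Periodic

section ToIcoMod

variable {T : ℝ} (hT : 0 < T)

theorem toIcoMod_zero_eq_sub_mul_floor (x : ℝ) : toIcoMod hT 0 x = x - T * ⌊x / T⌋ := by
  rw [toIcoMod, toIcoDiv_eq_floor, sub_zero, zsmul_eq_mul, mul_comm]

theorem measurable_toIcoMod (a : ℝ) : Measurable (toIcoMod hT a) := by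
  simp only [funext (toIcoMod_eq_add_fract_mul hT a)]
  fun_prop

theorem intervalIntegral_comp_toIcoMod {E : Type*} [NormedAddCommGroup E] [NormedSpace ℝ E]
    (f : ℝ → E) (a : ℝ) :
    ∫ x in a..a + T, f (toIcoMod hT a x) = ∫ x in a..a + T, f x := by
  refine intervalIntegral.integral_congr_Ioo_of_le (by linarith) fun x hx => ?_
  exact congrArg f ((toIcoMod_eq_self hT).2 (Ioo_subset_Ico_self hx))

end ToIcoMod

theorem stmt0_general {Ω E : Type*} [MeasurableSpace Ω] [NormedAddCommGroup E] [NormedSpace ℝ E]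
    [CompleteSpace E] {μ : Measure Ω} [IsProbabilityMeasure μ] {ω : Ω → ℝ} (hω : AEMeasurable ω μ)
    (hac : μ.map ω ≪ volume) {f : ℝ → E} {C T : ℝ} (hf : StronglyMeasurable f)
    (hC : ∀ x, ‖f x‖ ≤ C) (hT : 0 < T) :
    Tendsto (fun t : ℝ => ∫ a, f (toIcoMod hT 0 (ω a * t)) ∂μ) (cocompact ℝ)
      (𝓝 (⨍ s in 0..T, f s)) := by
  have : IsProbabilityMeasure (μ.map ω) := Measure.isProbabilityMeasure_map hω
  have mod_measurable : StronglyMeasurable fun x => f (toIcoMod hT 0 x) :=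
    hf.comp_measurable (measurable_toIcoMod hT 0)
  have mod_periodic : Function.Periodic (fun x => f (toIcoMod hT 0 x)) T :=
    (toIcoMod_periodic hT 0).comp f
  have mod_average : ⨍ s in 0..T, f (toIcoMod hT 0 s) = ⨍ s in 0..T, f s := by
    simpa only [interval_average_eq, zero_add] using
      congrArg ((T - 0)⁻¹ • ·) (intervalIntegral_comp_toIcoMod hT f 0)
  have law_tendsto := tendsto_integral_comp_mul_of_periodic_of_absolutelyContinuous hac
    mod_measurable (fun _ => hC _) mod_periodic hT.ne'
  rw [probReal_univ, one_smul, mod_average] at law_tendsto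
  refine law_tendsto.congr fun t => integral_map hω ?_
  exact (mod_measurable.comp_measurable (measurable_mul_const t)).aestronglyMeasurable

/-- If ω has a density w.r.t. Lebesgue measure on (0,∞), then (ωt) mod 2π converges
in distribution to the uniform distribution on [0,2π] as t → ∞: for every bounded
continuous f, E[f((ωt) mod 2π)] → (1/2π)∫₀^{2π} f(s) ds. -/
theorem stmt0 {Ω : Type*} [MeasurableSpace Ω] (μ : Measure Ω) [IsProbabilityMeasure μ]
    (ω : Ω → ℝ) (hω : Measurable ω)
    (hac : μ.map ω ≪ (volume : Measure ℝ).restrict (Set.Ioi 0)) :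
    ∀ f : ℝ → ℝ, Continuous f → (∃ C, ∀ x, |f x| ≤ C) →
      Tendsto (fun t : ℝ =>
          ∫ a, f (ω a * t - (2 * π) * ⌊ω a * t / (2 * π)⌋) ∂μ)
        atTop (nhds ((2 * π)⁻¹ * ∫ s in (0:ℝ)..(2 * π), f s)) := by
  rintro f hf ⟨C, hC⟩
  simpa only [toIcoMod_zero_eq_sub_mul_floor, interval_average_eq, sub_zero, smul_eq_mul] using
    (stmt0_general hω.aemeasurable (hac.trans Measure.absolutelyContinuous_restrict)
      hf.stronglyMeasurable hC two_pi_pos).mono_left atTop_le_cocompact
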